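/- arXiv:1004.3723 — 2 statements merged into one kernel-verified Lean document; each statement's English description precedes it below -/
import Mathlib

section
/- Let X be a finite rack, let i ∈ X, and let n be the order of the permutation φ_i of X. Then x_i^n lies in the center Z(G_X) of the enveloping group G_X. -/
/-!
Conjugation by `g ∈ G_X` permutes the generators `x_j` in the way `g` acts on `X`. Hence an element
acting trivially on `X` commutes with every generator and is central, and `x_i ^ n` acts on `X` as
`φ_i ^ n`.
-/

open Quandles

section

open Rack

variable {X : Type*} [Rack X]

variable (X) in
theorem closure_range_toEnvelGroup :
    Subgroup.closure (Set.range (toEnvelGroup X) : Set (EnvelGroup X)) = ⊤ := by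
  refine (Subgroup.eq_top_iff' _).mpr fun g ↦ Quotient.inductionOn g fun a ↦ ?_
  induction a with
  | unit => exact one_mem _
  | incl x => exact Subgroup.subset_closure (Set.mem_range_self x)
  | mul a b ha hb => exact mul_mem ha hb
  | inv a ha => exact inv_mem ha

theorem toEnvelGroup_envelAction (g : EnvelGroup X) (x : X) :
    (toEnvelGroup X (envelAction g x) : EnvelGroup X) = g * toEnvelGroup X x * g⁻¹ := by
  have hg : g ∈ Subgroup.closure (Set.range (toEnvelGroup X) : Set (EnvelGroup X)) :=
    closure_range_toEnvelGroup X ▸ Subgroup.mem_top g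
  induction hg using Subgroup.closure_induction generalizing x with
  | mem _ hy =>
    obtain ⟨y, rfl⟩ := hy
    exact (toEnvelGroup X).map_act
  | one => simp
  | mul g h _ _ ihg ihh =>
    rw [map_mul, Equiv.Perm.mul_apply, ihg, ihh]
    group
  | inv g _ ihg =>
    have hgx : envelAction g (envelAction g⁻¹ x) = x := by
      rw [map_inv]
      exact (envelAction g).apply_symm_apply x
    have hconj := ihg (envelAction g⁻¹ x)
    rw [hgx] at hconj
    rw [hconj]
    group

theorem ker_envelAction_le_center :
    (envelAction : EnvelGroup X →* X ≃ X).ker ≤ Subgroup.center (EnvelGroup X) := by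
  intro g hg
  rw [← Subgroup.centralizer_univ, ← Subgroup.coe_top, ← closure_range_toEnvelGroup X,
    Subgroup.centralizer_closure, Subgroup.mem_centralizer_iff]
  rintro _ ⟨x, rfl⟩
  have hconj := toEnvelGroup_envelAction g x
  rw [MonoidHom.mem_ker.mp hg, Equiv.Perm.one_apply] at hconj
  exact eq_mul_inv_iff_mul_eq.mp hconj

theorem envel_power_central_general (i : X) {n : ℕ} (hn : (act' i : Equiv.Perm X) ^ n = 1) :
    (toEnvelGroup X i : EnvelGroup X) ^ n ∈ Subgroup.center (EnvelGroup X) := by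
  have envelAction_gen : envelAction (toEnvelGroup X i : EnvelGroup X) = act' i := rfl
  apply ker_envelAction_le_center
  rw [MonoidHom.mem_ker, map_pow, envelAction_gen, hn]

end

/-- Let X be a finite rack, i ∈ X and n the order of the permutation φ_i of X.
Then x_i^n lies in the center of the enveloping group G_X. -/
theorem envel_power_central {X : Type*} [Rack X] [Finite X] (i : X) :
    (Rack.toEnvelGroup X i : Rack.EnvelGroup X) ^ orderOf (Rack.act' i : Equiv.Perm X) ∈
      Subgroup.center (Rack.EnvelGroup X) :=
  envel_power_central_general i (pow_orderOf_eq_one _)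
end

section
/- Let G be a group and let X be a finite conjugacy class of G generating G with d = #X > 1, viewed as a rack under conjugation. Let x, y ∈ X and n ∈ ℕ with n ≥ 1. The following are equivalent: (1) the H-orbit 𝒪(x,y) has exactly n elements; (2) x ▸_n y = y and x ▸_k y ≠ y for all k ∈ {1, …, n−1}; (3) y ▸_n x = x and y ▸_k x ≠ x for all k ∈ {1, …, n−1}; (4) Prod(x̄, ȳ; n) = Prod(ȳ, x̄; n) in the enveloping group G_X and Prod(x̄, ȳ; k) ≠ Prod(ȳ, x̄; k) for all k ∈ {1, …, n−1}. -/
open Quandles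

/-- The conjugacy class of `g` in `G`, as a type. -/
def ConjClass (G : Type*) [Group G] (g : G) : Type _ := {h : G // IsConj g h}

namespace ConjClass

variable {G : Type*} [Group G] {g : G}

/-- The conjugacy class of `g`, viewed as a rack under conjugation. -/
instance : Rack (ConjClass G g) where
  act x y := ⟨x.1 * y.1 * x.1⁻¹, y.2.trans (isConj_iff.mpr ⟨x.1, rfl⟩)⟩
  self_distrib := by
    rintro ⟨x, hx⟩ ⟨y, hy⟩ ⟨z, hz⟩
    apply Subtype.ext
    show x * (y * z * y⁻¹) * x⁻¹ = x * y * x⁻¹ * (x * z * x⁻¹) * (x * y * x⁻¹)⁻¹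
    group
  invAct x y := ⟨x.1⁻¹ * y.1 * x.1, y.2.trans (isConj_iff.mpr ⟨x.1⁻¹, by group⟩)⟩
  left_inv := by
    rintro ⟨x, hx⟩ ⟨y, hy⟩
    apply Subtype.ext
    show x⁻¹ * (x * y * x⁻¹) * x = y
    group
  right_inv := by
    rintro ⟨x, hx⟩ ⟨y, hy⟩
    apply Subtype.ext
    show x * (x⁻¹ * y * x) * x⁻¹ = y
    group

end ConjClass

/-- The braiding `c(i,j) = (i ◃ j, i)` on `X × X`, as a permutation. -/
def rackBraid (R : Type*) [Rack R] : Equiv.Perm (R × R) where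
  toFun p := (p.1 ◃ p.2, p.1)
  invFun p := (p.2, p.2 ◃⁻¹ p.1)
  left_inv := by
    rintro ⟨a, b⟩
    simp
  right_inv := by
    rintro ⟨a, b⟩
    simp

/-- The orbit `𝒪(i,j)` of a pair under the cyclic group generated by the braiding. -/
def rackOrbit {R : Type*} [Rack R] (p : R × R) : Set (R × R) :=
  {q | ∃ m : ℤ, (rackBraid R ^ m) p = q}

/-- `kNum i n` is the number of `j` such that the orbit `𝒪(i,j)` has `n` elements. -/
noncomputable def kNum {R : Type*} [Rack R] (i : R) (n : ℕ) : ℕ :=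
  Nat.card {j : R // Nat.card ↥(rackOrbit (i, j)) = n}

/-- `lNum R n` is the number of orbits of the braiding on `R × R` having `n` elements. -/
noncomputable def lNum (R : Type*) [Rack R] (n : ℕ) : ℕ :=
  Nat.card {O : Set (R × R) // (∃ p, O = rackOrbit p) ∧ Nat.card ↥O = n}

/-- `nact n x y` is `x ▸ₙ y = x ◃ (y ◃ (x ◃ ⋯))` with `n` factors from the rack
(meaningful for `n ≥ 1`; `nact 0 x y` is the junk value `y`). -/
def nact {R : Type*} [Rack R] : ℕ → R → R → R
  | 0, _, y => y
  | 1, x, _ => x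
  | n + 2, x, y => x ◃ nact (n + 1) y x

/-- `altProd v w n = Prod(v, w; n) = v·w·v·w·⋯` with `n` factors, `altProd v w 0 = 1`. -/
def altProd {G : Type*} [Group G] : G → G → ℕ → G
  | _, _, 0 => 1
  | v, w, n + 1 => v * altProd w v n

/-!
Put `x₀ = y` and `xₘ = x ▸ₘ y` for `m ≥ 1`. In the enveloping group
`x̄ₘ₊₁ = Prod(x̄, ȳ; m+1) · Prod(x̄, ȳ; m)⁻¹`, so the product `x̄ₘ₊₁ x̄ₘ = x̄ ȳ` does not depend
on `m`. If the rack embeds in its enveloping group, it follows that the braiding sends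
`(xₘ₊₁, xₘ)` to `(xₘ₊₂, xₘ₊₁)` and that `(x, y)` returns to itself after `m` steps exactly when
`xₘ = y`. Since `Prod(ȳ, x̄; m+1) = ȳ · Prod(x̄, ȳ; m)`, for `m ≥ 1` this happens exactly when
`Prod(x̄, ȳ; m) = Prod(ȳ, x̄; m)`, a condition symmetric in `x` and `y`. The size of the orbit is
the least period of `(x, y)`.
-/

theorem minimalPeriod_eq_iff_isPeriodicPt {α : Type*} {f : α → α} {a : α} {n : ℕ} (hn : 0 < n) :
    Function.minimalPeriod f a = n ↔
      Function.IsPeriodicPt f n a ∧ ∀ k, 0 < k → k < n → ¬ Function.IsPeriodicPt f k a := by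
  constructor
  · rintro rfl
    exact ⟨Function.isPeriodicPt_minimalPeriod f a, fun k hk hlt ↦
      Function.not_isPeriodicPt_of_pos_of_lt_minimalPeriod hk.ne' hlt⟩
  · rintro ⟨hper, hmin⟩
    refine (hper.minimalPeriod_le hn).antisymm (not_lt.mp fun hlt ↦ ?_)
    exact hmin _ (hper.minimalPeriod_pos hn) hlt (Function.isPeriodicPt_minimalPeriod f a)

section Rack

variable {R : Type*} [Rack R]

theorem rackOrbit_eq_orbit_zpowers (p : R × R) :
    rackOrbit p = MulAction.orbit (Subgroup.zpowers (rackBraid R)) p := by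
  ext q
  constructor
  · rintro ⟨m, rfl⟩
    exact ⟨⟨rackBraid R ^ m, m, rfl⟩, rfl⟩
  · rintro ⟨⟨_, m, rfl⟩, rfl⟩
    exact ⟨m, rfl⟩

theorem natCard_rackOrbit (p : R × R) :
    Nat.card (rackOrbit p) = Function.minimalPeriod (rackBraid R) p := by
  rw [rackOrbit_eq_orbit_zpowers, Nat.card_congr (MulAction.orbitZPowersEquiv (rackBraid R) p),
    Nat.card_zmod]
  rfl

theorem natCard_rackOrbit_eq_iff {p : R × R} {n : ℕ} (hn : 1 ≤ n) {P : ℕ → Prop}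
    (hP : ∀ m, 1 ≤ m → (Function.IsPeriodicPt (rackBraid R) m p ↔ P m)) :
    Nat.card (rackOrbit p) = n ↔ P n ∧ ∀ k, 1 ≤ k → k ≤ n - 1 → ¬ P k := by
  rw [natCard_rackOrbit, minimalPeriod_eq_iff_isPeriodicPt hn, hP n hn]
  refine and_congr_right fun _ ↦ forall₂_congr fun k hk ↦ ?_
  rw [hP k hk, Nat.le_sub_one_iff_lt hn]

/-- The generator `x̄` of the enveloping group `G_X`, as an element of the group itself:
`Rack.toEnvelGroup` takes values in the conjugation quandle of that group. -/
def envelGen (x : R) : Rack.EnvelGroup R :=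
  Rack.toEnvelGroup R x

theorem envelGen_act (x y : R) : envelGen (x ◃ y) = envelGen x * envelGen y * (envelGen x)⁻¹ :=
  (Rack.toEnvelGroup R).map_act

theorem envelGen_injective_of_conj {G : Type*} [Group G] (f : R →◃ Quandle.Conj G)
    (hf : Function.Injective f) : Function.Injective (envelGen : R → Rack.EnvelGroup R) :=
  fun _ _ h ↦ hf (congrArg (Rack.toEnvelGroup.map f) h)

theorem envelGen_nact_succ_mul_altProd (m : ℕ) (x y : R) :
    envelGen (nact (m + 1) x y) * altProd (envelGen x) (envelGen y) m =
      altProd (envelGen x) (envelGen y) (m + 1) := by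
  induction m generalizing x y with
  | zero => rfl
  | succ m ih =>
    calc envelGen (x ◃ nact (m + 1) y x) * (envelGen x * altProd (envelGen y) (envelGen x) m)
        = envelGen x * (envelGen (nact (m + 1) y x) * altProd (envelGen y) (envelGen x) m) := by
          rw [envelGen_act]; group
      _ = envelGen x * altProd (envelGen y) (envelGen x) (m + 1) := by rw [ih]

theorem envelGen_nact_succ_mul_nact (m : ℕ) (x y : R) :
    envelGen (nact (m + 1) x y) * envelGen (nact m x y) = envelGen x * envelGen y := by
  cases m with
  | zero => rfl
  | succ m =>
    apply mul_right_cancel (b := altProd (envelGen x) (envelGen y) m)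
    rw [mul_assoc, envelGen_nact_succ_mul_altProd, envelGen_nact_succ_mul_altProd, mul_assoc]
    rfl

section Injective

variable (hinj : Function.Injective (envelGen : R → Rack.EnvelGroup R))
include hinj

theorem nact_succ_act_nact (m : ℕ) (x y : R) :
    nact (m + 1) x y ◃ nact m x y = nact (m + 2) x y := by
  apply hinj
  rw [envelGen_act, envelGen_nact_succ_mul_nact, mul_inv_eq_iff_eq_mul,
    envelGen_nact_succ_mul_nact]

theorem rackBraid_iterate (m : ℕ) (x y : R) :
    (rackBraid R)^[m] (x, y) = (nact (m + 1) x y, nact m x y) := by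
  induction m with
  | zero => rfl
  | succ m ih =>
    rw [Function.iterate_succ_apply', ih, ← nact_succ_act_nact hinj]
    rfl

theorem isPeriodicPt_rackBraid_iff (m : ℕ) (x y : R) :
    Function.IsPeriodicPt (rackBraid R) m (x, y) ↔ nact m x y = y := by
  rw [Function.IsPeriodicPt, Function.IsFixedPt, rackBraid_iterate hinj, Prod.mk.injEq]
  refine and_iff_right_of_imp fun hy ↦ hinj ?_
  simpa only [hy, mul_left_inj] using envelGen_nact_succ_mul_nact m x y

theorem nact_eq_iff_altProd_comm {m : ℕ} (hm : 1 ≤ m) (x y : R) :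
    nact m x y = y ↔
      altProd (envelGen x) (envelGen y) m = altProd (envelGen y) (envelGen x) m := by
  obtain ⟨m, rfl⟩ := Nat.exists_eq_add_of_le' hm
  rw [← envelGen_nact_succ_mul_altProd, altProd, mul_left_inj, hinj.eq_iff]

theorem nact_eq_comm {m : ℕ} (hm : 1 ≤ m) (x y : R) : nact m x y = y ↔ nact m y x = x := by
  rw [nact_eq_iff_altProd_comm hinj hm, nact_eq_iff_altProd_comm hinj hm, eq_comm]

theorem orbit_size_equivalences_general (x y : R) {n : ℕ} (hn : 1 ≤ n) :
    (Nat.card (rackOrbit (x, y)) = n ↔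
        nact n x y = y ∧ ∀ k, 1 ≤ k → k ≤ n - 1 → nact k x y ≠ y) ∧
      (Nat.card (rackOrbit (x, y)) = n ↔
        nact n y x = x ∧ ∀ k, 1 ≤ k → k ≤ n - 1 → nact k y x ≠ x) ∧
      (Nat.card (rackOrbit (x, y)) = n ↔
        altProd (envelGen x) (envelGen y) n = altProd (envelGen y) (envelGen x) n ∧
          ∀ k, 1 ≤ k → k ≤ n - 1 →
            altProd (envelGen x) (envelGen y) k ≠ altProd (envelGen y) (envelGen x) k) :=
  have hper (m : ℕ) := isPeriodicPt_rackBraid_iff hinj m x y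
  ⟨natCard_rackOrbit_eq_iff hn fun m _ ↦ hper m,
    natCard_rackOrbit_eq_iff hn fun m hm ↦ (hper m).trans (nact_eq_comm hinj hm x y),
    natCard_rackOrbit_eq_iff hn fun m hm ↦
      (hper m).trans (nact_eq_iff_altProd_comm hinj hm x y)⟩

end Injective

end Rack

namespace ConjClass

variable {G : Type*} [Group G] {g : G}

/-- The inclusion of a conjugacy class in its group, as a map of racks. -/
def toConj : ConjClass G g →◃ Quandle.Conj G where
  toFun x := x.1
  map_act' := rfl

theorem envelGen_injective :
    Function.Injective (envelGen : ConjClass G g → Rack.EnvelGroup (ConjClass G g)) :=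
  envelGen_injective_of_conj toConj Subtype.val_injective

end ConjClass

/-- Let X be a finite conjugacy class of a group G which generates G, with d = #X > 1,
viewed as a rack under conjugation.  For x, y ∈ X and n ≥ 1 the following are
equivalent: (1) the orbit 𝒪(x,y) of the braiding has exactly n elements;
(2) x ▸ₙ y = y and x ▸ₖ y ≠ y for 1 ≤ k ≤ n−1;
(3) y ▸ₙ x = x and y ▸ₖ x ≠ x for 1 ≤ k ≤ n−1;
(4) Prod(x̄, ȳ; n) = Prod(ȳ, x̄; n) in the enveloping group G_X and
Prod(x̄, ȳ; k) ≠ Prod(ȳ, x̄; k) for 1 ≤ k ≤ n−1. -/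
theorem orbit_size_equivalences {G : Type*} [Group G] (g : G) [Finite (ConjClass G g)]
    (hgen : Subgroup.closure {h : G | IsConj g h} = ⊤)
    (hd : 1 < Nat.card (ConjClass G g))
    (x y : ConjClass G g) (n : ℕ) (hn : 1 ≤ n) :
    ((Nat.card ↥(rackOrbit (x, y)) = n ↔
        (nact n x y = y ∧ ∀ k : ℕ, 1 ≤ k → k ≤ n - 1 → nact k x y ≠ y)) ∧
      (Nat.card ↥(rackOrbit (x, y)) = n ↔
        (nact n y x = x ∧ ∀ k : ℕ, 1 ≤ k → k ≤ n - 1 → nact k y x ≠ x)) ∧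
      (Nat.card ↥(rackOrbit (x, y)) = n ↔
        (altProd (Rack.toEnvelGroup (ConjClass G g) x : Rack.EnvelGroup (ConjClass G g))
              (Rack.toEnvelGroup (ConjClass G g) y) n =
            altProd (Rack.toEnvelGroup (ConjClass G g) y : Rack.EnvelGroup (ConjClass G g))
              (Rack.toEnvelGroup (ConjClass G g) x) n ∧
          ∀ k : ℕ, 1 ≤ k → k ≤ n - 1 →
            altProd (Rack.toEnvelGroup (ConjClass G g) x : Rack.EnvelGroup (ConjClass G g))
                (Rack.toEnvelGroup (ConjClass G g) y) k ≠
              altProd (Rack.toEnvelGroup (ConjClass G g) y : Rack.EnvelGroup (ConjClass G g))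
                (Rack.toEnvelGroup (ConjClass G g) x) k))) :=
  orbit_size_equivalences_general ConjClass.envelGen_injective x y hn
end
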